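/- arXiv:2302.00154 — 9 statements merged into one kernel-verified Lean document; each statement's English description precedes it below -/
import Mathlib

section
/- For every positive integer a, arctan(1/(2^(a+1)−1)) + arctan((2^a−1)/2^a) = π/4. -/
theorem stmt_9 (a : ℕ) (ha : 0 < a) :
    Real.arctan (1 / (2 ^ (a + 1) - 1)) + Real.arctan ((2 ^ a - 1) / 2 ^ a) =
      Real.pi / 4 := by
  have ht : (1 : ℝ) ≤ 2 ^ a := one_le_pow₀ (by norm_num)
  rw [pow_succ]
  generalize (2 : ℝ) ^ a = t at ht ⊢
  have h0 : 0 < t := by linarith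
  have h1 : 0 < t * 2 - 1 := by linarith
  -- With `x`, `y` the two arguments, `x + y` and `1 - x * y` both equal
  -- `(2t² - 2t + 1) / (t(2t - 1))`, which is positive; so the addition formula gives `arctan 1`.
  have hD : 0 < 1 - 1 / (t * 2 - 1) * ((t - 1) / t) := by
    have : 1 - 1 / (t * 2 - 1) * ((t - 1) / t) =
        (t ^ 2 + (t - 1) ^ 2) / ((t * 2 - 1) * t) := by
      field_simp
      ring
    rw [this]
    positivity
  have hS : 1 / (t * 2 - 1) + (t - 1) / t = 1 - 1 / (t * 2 - 1) * ((t - 1) / t) := by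
    field_simp
    ring
  rw [Real.arctan_add (by linarith), hS, div_self hD.ne', Real.arctan_one]
end

section
/- For every real number ε > 0 there exist positive integers n, b₁, b₂ with b₁ ≥ 2, and an integer a₂ with 0 < |a₂| < b₂, such that n·arctan(1/b₁) − arctan(a₂/b₂) = π/4 and 1/log₁₀(b₁) + 1/log₁₀(b₂/|a₂|) < ε. -/
/-!
Take `b₁ = b` a large power of ten, `θ = arctan (1 / b)`, and let `n` be the least integer with
`n * θ ≥ π / 4`. The excess `δ = n * θ - π / 4` lies in `[0, θ)`, so `0 ≤ tan δ < 1 / b`.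
Since `(b + i) ^ n = x + i y` with `x, y` integers has argument `n * θ` modulo `2 * π`,
multiplying by `1 - i` gives `tan δ = (y - x) / (x + y)`, a rational number `a₂ / b₂`. As `b` is
even, `x + y` is odd (`exists_gaussian_pow`), hence so is `y - x`, which is therefore nonzero.
Both terms of the measure are at most `1 / log₁₀ b`, and `b` can be chosen as large as needed.
-/

/-- The integers `x, y` are the real and imaginary parts of `(b + i) ^ n`; the hypotheses say that
`exp (i θ) = c * (b + i)`. For even `b` the sum `x + y` is odd. -/
lemma exists_gaussian_pow (b : ℤ) (hb : Even b) (θ c : ℝ)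
    (hcos : Real.cos θ = c * b) (hsin : Real.sin θ = c) (n : ℕ) :
    ∃ x y : ℤ, Odd (x + y) ∧ Real.cos (n * θ) = c ^ n * x ∧ Real.sin (n * θ) = c ^ n * y := by
  induction n with
  | zero => exact ⟨1, 0, by decide, by simp, by simp⟩
  | succ n ih =>
    obtain ⟨x, y, hxy, hx, hy⟩ := ih
    refine ⟨b * x - y, b * y + x, ?_, ?_, ?_⟩
    · obtain ⟨m, rfl⟩ := hb
      obtain ⟨k, hk⟩ := hxy
      exact ⟨m * x + m * y - y + k, by linear_combination hk⟩
    · push_cast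
      rw [add_mul, one_mul, Real.cos_add, hx, hy, hcos, hsin]
      ring
    · push_cast
      rw [add_mul, one_mul, Real.sin_add, hx, hy, hcos, hsin]
      ring

/-- A two-term identity for `π / 4` whose second argument is smaller than the first one. -/
lemma exists_identity (b : ℕ) (hb : Even b) (hb2 : 2 ≤ b) :
    ∃ (n b₂ : ℕ) (a₂ : ℤ), 0 < n ∧ 0 < b₂ ∧ 0 < a₂ ∧ (b : ℝ) * a₂ < b₂ ∧
      (n : ℝ) * Real.arctan (1 / (b : ℝ)) - Real.arctan ((a₂ : ℝ) / (b₂ : ℝ)) =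
        Real.pi / 4 := by
  have hbR : (2 : ℝ) ≤ b := by exact_mod_cast hb2
  have hb0 : (0 : ℝ) < b := by linarith
  obtain ⟨θ, hθ⟩ : ∃ θ, θ = Real.arctan (1 / (b : ℝ)) := ⟨_, rfl⟩
  have hθ0 : 0 < θ := hθ ▸ Real.arctan_pos.2 (by positivity)
  have hθ2 : θ < Real.pi / 2 := hθ ▸ Real.arctan_lt_pi_div_two _
  have htan : Real.tan θ = 1 / b := by rw [hθ, Real.tan_arctan]
  have hcosθ : 0 < Real.cos θ := Real.cos_pos_of_mem_Ioo ⟨by linarith, hθ2⟩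
  have hsinθ : 0 < Real.sin θ := Real.sin_pos_of_pos_of_lt_pi hθ0 (by linarith)
  have hcs : Real.cos θ = Real.sin θ * ((b : ℤ) : ℝ) := by
    rw [Real.tan_eq_sin_div_cos] at htan
    field_simp at htan
    push_cast
    linarith
  have hπ := Real.pi_pos
  obtain ⟨n, hn⟩ : ∃ n, n = ⌈Real.pi / 4 / θ⌉₊ := ⟨_, rfl⟩
  have hn0 : 0 < n := hn ▸ Nat.ceil_pos.2 (by positivity)
  have hle : Real.pi / 4 ≤ n * θ := by
    rw [← div_le_iff₀ hθ0, hn]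
    exact Nat.le_ceil _
  have hlt : n * θ < Real.pi / 4 + θ := by
    have h := Nat.ceil_lt_add_one (a := Real.pi / 4 / θ) (by positivity)
    rw [← hn] at h
    have h' := mul_lt_mul_of_pos_right h hθ0
    rwa [add_mul, one_mul, div_mul_cancel₀ _ hθ0.ne'] at h'
  obtain ⟨x, y, hxy, hx, hy⟩ :=
    exists_gaussian_pow b (by exact_mod_cast hb) θ (Real.sin θ) hcs rfl n
  obtain ⟨δ, hδ⟩ : ∃ δ, δ = n * θ - Real.pi / 4 := ⟨_, rfl⟩
  obtain ⟨k, hk⟩ : ∃ k, k = Real.sin θ ^ n * (√2 / 2) := ⟨_, rfl⟩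
  have hk0 : 0 < k := by rw [hk]; positivity
  have hcos : Real.cos δ = k * ((x + y : ℤ) : ℝ) := by
    rw [hδ, Real.cos_sub, hx, hy, Real.cos_pi_div_four, Real.sin_pi_div_four, hk]
    push_cast
    ring
  have hsin : Real.sin δ = k * ((y - x : ℤ) : ℝ) := by
    rw [hδ, Real.sin_sub, hx, hy, Real.cos_pi_div_four, Real.sin_pi_div_four, hk]
    push_cast
    ring
  have hcos0 : 0 < Real.cos δ := Real.cos_pos_of_mem_Ioo ⟨by linarith, by linarith⟩
  have hsin0 : 0 ≤ Real.sin δ := Real.sin_nonneg_of_nonneg_of_le_pi (by linarith) (by linarith)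
  have hs : 0 < x + y := by
    rw [hcos] at hcos0
    exact_mod_cast pos_of_mul_pos_right hcos0 hk0.le
  have hd : 0 ≤ y - x := by
    rw [hsin] at hsin0
    exact_mod_cast nonneg_of_mul_nonneg_right hsin0 hk0
  have hd' : 0 < y - x := by
    obtain ⟨m, hm⟩ := hxy
    omega
  have htanδ : Real.tan δ = ((y - x : ℤ) : ℝ) / ((x + y : ℤ) : ℝ) := by
    rw [Real.tan_eq_sin_div_cos, hsin, hcos, mul_div_mul_left _ _ hk0.ne']
  have htlt : Real.tan δ < 1 / b := by
    rw [← htan]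
    exact Real.tan_lt_tan_of_lt_of_lt_pi_div_two (by linarith) hθ2 (by linarith)
  have harc : Real.arctan (Real.tan δ) = δ := Real.arctan_tan (by linarith) (by linarith)
  generalize y - x = d at *
  generalize x + y = s at *
  lift s to ℕ using hs.le
  refine ⟨n, s, d, hn0, by exact_mod_cast hs, hd', ?_, ?_⟩
  · have hsR : (0 : ℝ) < ((s : ℤ) : ℝ) := by exact_mod_cast hs
    rw [htanδ, div_lt_div_iff₀ hsR hb0] at htlt
    push_cast at htlt
    linarith
  · push_cast at htanδ
    rw [← hθ, ← htanδ, harc, hδ]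
    ring

theorem stmt_10 (ε : ℝ) (hε : 0 < ε) :
    ∃ (n b₁ b₂ : ℕ) (a₂ : ℤ), 0 < n ∧ 2 ≤ b₁ ∧ 0 < b₂ ∧
      0 < |a₂| ∧ |a₂| < (b₂ : ℤ) ∧
      (n : ℝ) * Real.arctan (1 / (b₁ : ℝ)) - Real.arctan ((a₂ : ℝ) / (b₂ : ℝ)) =
        Real.pi / 4 ∧
      1 / Real.logb 10 (b₁ : ℝ) + 1 / Real.logb 10 ((b₂ : ℝ) / |(a₂ : ℝ)|) < ε := by
  obtain ⟨k, hk⟩ := exists_nat_gt (2 / ε)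
  have hkR : (0 : ℝ) < k := lt_trans (by positivity) hk
  have hk0 : k ≠ 0 := by rintro rfl; simp at hkR
  have hb2 : 2 ≤ 10 ^ k := le_trans (by norm_num) (Nat.le_self_pow hk0 10)
  obtain ⟨n, b₂, a₂, hn, hb₂, ha, hab, hid⟩ :=
    exists_identity (10 ^ k) (Nat.even_pow.2 ⟨by decide, hk0⟩) hb2
  have haR : (0 : ℝ) < a₂ := by exact_mod_cast ha
  have hlog : Real.logb 10 ((10 ^ k : ℕ) : ℝ) = k := by
    push_cast
    rw [Real.logb_pow, Real.logb_self_eq_one (by norm_num), mul_one]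
  have hlog2 : (k : ℝ) ≤ Real.logb 10 ((b₂ : ℝ) / |(a₂ : ℝ)|) := by
    rw [← hlog, abs_of_pos haR]
    refine Real.logb_le_logb_of_le (by norm_num) (by positivity) ?_
    rw [le_div_iff₀ haR]
    exact hab.le
  refine ⟨n, 10 ^ k, b₂, a₂, hn, hb2, hb₂, abs_pos.2 ha.ne', ?_, hid, ?_⟩
  · rw [abs_of_pos ha]
    have h2 : (2 : ℝ) ≤ ((10 ^ k : ℕ) : ℝ) := by exact_mod_cast hb2
    have : (a₂ : ℝ) < b₂ := by nlinarith
    exact_mod_cast this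
  · rw [hlog]
    have h1 := one_div_le_one_div_of_le hkR hlog2
    have h2 : 2 / (k : ℝ) < ε := by
      rw [div_lt_iff₀ hε] at hk
      rw [div_lt_iff₀ hkR]
      linarith
    have h3 : 2 / (k : ℝ) = 1 / k + 1 / k := by ring
    linarith
end

section
/- For every real number ε > 0 and every natural number N ≥ 2 there exist nonzero rational numbers c₁, …, c_N, integers a₁, …, a_N and positive integers b₁, …, b_N with 0 < |a_k| < b_k for every k, such that Σ_{k=1}^{N} c_k·arctan(a_k/b_k) = π/4 and Σ_{k=1}^{N} 1/log₁₀(b_k/|a_k|) < ε. -/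
/-!
Fix a large integer `m` and put `θ = arctan (1/m)`. Division with remainder gives
`π/4 = n θ + φ` with `n ≥ 1` and `0 ≤ φ < θ`. The angle `φ = π/4 - n θ` has rational tangent
`q ∈ [0, 1/m)`, since multiplying by a power of `m - i` keeps a direction rational
(`exists_scaled_cos_sin`). Thus `π/4 = n arctan (1/m) + arctan q`. Because neither distinctness of
the arguments nor integrality of the coefficients is required, `n arctan (1/m)` can be split into
equal pieces to produce exactly `N` nonzero terms (`N` pieces if `q = 0`, and `N - 1` pieces plus
`arctan q` otherwise). All arguments are at most `1/m`, so the Lehmer measure is at most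
`N / log₁₀ m`, which is small for large `m`.
-/

/-- The direction of angle `π/4 - n * arctan (1/m)` contains a nonzero vector with rational
coordinates: for `m > 0` one may take `(1 + i) * (m - i) ^ n` (for `m = 0` the angle is `π/4`). -/
lemma exists_scaled_cos_sin (m : ℕ) (n : ℕ) :
    ∃ (r : ℝ) (u v : ℚ), r ≠ 0 ∧
      r * Real.cos (Real.pi / 4 - n * Real.arctan (1 / (m : ℝ))) = u ∧
      r * Real.sin (Real.pi / 4 - n * Real.arctan (1 / (m : ℝ))) = v := by
  induction n with
  | zero =>
    have h : √2 * (√2 / 2) = (1 : ℝ) := by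
      rw [← mul_div_assoc, Real.mul_self_sqrt (by norm_num), div_self two_ne_zero]
    refine ⟨√2, 1, 1, by positivity, ?_, ?_⟩ <;> simp [h, Real.cos_pi_div_four, Real.sin_pi_div_four]
  | succ n ih =>
    obtain ⟨r, u, v, hr, hu, hv⟩ := ih
    set θ := Real.arctan (1 / (m : ℝ)) with hθ
    have hc : Real.cos θ ≠ 0 := (Real.cos_arctan_pos _).ne'
    have ht : Real.sin θ = (1 / (m : ℝ)) * Real.cos θ := by
      rw [← Real.tan_mul_cos hc, hθ, Real.tan_arctan]
    have e : Real.pi / 4 - ((n + 1 : ℕ) : ℝ) * θ = (Real.pi / 4 - n * θ) - θ := by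
      push_cast; ring
    refine ⟨r / Real.cos θ, u + v * (1 / m), v - u * (1 / m), div_ne_zero hr hc, ?_, ?_⟩
    · rw [e, Real.cos_sub, ht]
      push_cast
      rw [← hu, ← hv]
      field_simp
    · rw [e, Real.sin_sub, ht]
      push_cast
      rw [← hu, ← hv]
      field_simp

lemma exists_arctan_decomposition (m : ℕ) (hm : 2 ≤ m) :
    ∃ (n : ℕ) (q : ℚ), n ≠ 0 ∧ 0 ≤ q ∧ q ≤ 1 / m ∧
      n * Real.arctan (1 / (m : ℝ)) + Real.arctan q = Real.pi / 4 := by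
  have hm0 : (2 : ℝ) ≤ m := by exact_mod_cast hm
  set θ := Real.arctan (1 / (m : ℝ)) with hθ
  have hθ0 : 0 < θ := Real.arctan_pos.2 (by positivity)
  have hθ1 : θ ≤ Real.pi / 4 := by
    rw [← Real.arctan_one]
    apply Real.arctan_strictMono.monotone
    rw [div_le_one (by linarith)]
    linarith
  set n := ⌊Real.pi / 4 / θ⌋₊ with hn
  have h1 : n * θ ≤ Real.pi / 4 :=
    (le_div_iff₀ hθ0).1 (Nat.floor_le (by positivity))
  have h2 : Real.pi / 4 < (n + 1) * θ := (div_lt_iff₀ hθ0).1 (Nat.lt_floor_add_one _)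
  have hn0 : n ≠ 0 := by
    have : 0 < n := Nat.floor_pos.2 ((one_le_div hθ0).2 hθ1)
    omega
  obtain ⟨r, u, v, hr, hu, hv⟩ := exists_scaled_cos_sin m n
  rw [← hθ] at hu hv
  set φ := Real.pi / 4 - n * θ with hφ
  have hπ := Real.pi_pos
  have hq : ((v / u : ℚ) : ℝ) = Real.tan φ := by
    push_cast
    rw [← hu, ← hv, mul_div_mul_left _ _ hr, Real.tan_eq_sin_div_cos]
  have hat : Real.arctan ((v / u : ℚ) : ℝ) = φ := by
    rw [hq, Real.arctan_tan] <;> nlinarith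
  refine ⟨n, v / u, hn0, ?_, ?_, ?_⟩
  · have : (0 : ℝ) ≤ ((v / u : ℚ) : ℝ) := by
      rw [← Real.arctan_nonneg, hat]; linarith
    exact_mod_cast this
  · have : ((v / u : ℚ) : ℝ) ≤ 1 / (m : ℝ) := by
      rw [← Real.arctan_strictMono.le_iff_le, hat]; linarith
    rw [← Rat.cast_le (K := ℝ)]
    push_cast at this ⊢
    exact this
  · rw [hat]; ring

lemma exists_rat_identity (m : ℕ) (hm : 2 ≤ m) (N : ℕ) (hN : 2 ≤ N) :
    ∃ c x : Fin N → ℚ, (∀ k, c k ≠ 0) ∧ (∀ k, 0 < x k ∧ x k ≤ 1 / m) ∧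
      ∑ k, (c k : ℝ) * Real.arctan (x k) = Real.pi / 4 := by
  obtain ⟨n, q, hn, hq0, hq1, h⟩ := exists_arctan_decomposition m hm
  have hm' : (0 : ℚ) < 1 / m := by
    have : (0 : ℚ) < m := by exact_mod_cast (by omega : 0 < m)
    positivity
  have hn' : (n : ℚ) ≠ 0 := by exact_mod_cast hn
  rcases hq0.eq_or_lt with rfl | hq
  · have hN' : (N : ℚ) ≠ 0 := by exact_mod_cast (by omega : N ≠ 0)
    have hN'' : (N : ℝ) ≠ 0 := by exact_mod_cast hN'
    refine ⟨fun _ => n / N, fun _ => 1 / m, fun _ => div_ne_zero hn' hN',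
      fun _ => ⟨hm', le_rfl⟩, ?_⟩
    rw [← h]
    simp only [Finset.sum_const, Finset.card_univ, Fintype.card_fin, nsmul_eq_mul]
    push_cast
    rw [Real.arctan_zero]
    field_simp
    ring
  · obtain ⟨K, rfl⟩ : ∃ K, N = K + 1 := ⟨N - 1, by omega⟩
    have hK' : (K : ℚ) ≠ 0 := by exact_mod_cast (by omega : K ≠ 0)
    have hK'' : (K : ℝ) ≠ 0 := by exact_mod_cast hK'
    refine ⟨Fin.cons 1 fun _ => n / K, Fin.cons q fun _ => 1 / m, ?_, ?_, ?_⟩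
    · intro k
      cases k using Fin.cases with
      | zero => simp
      | succ k => simpa using ⟨hn, by omega⟩
    · intro k
      cases k using Fin.cases with
      | zero => exact ⟨hq, hq1⟩
      | succ k => exact ⟨hm', le_rfl⟩
    · rw [← h, Fin.sum_univ_succ]
      simp only [Fin.cons_zero, Fin.cons_succ, Finset.sum_const, Finset.card_univ,
        Fintype.card_fin, nsmul_eq_mul]
      push_cast
      field_simp
      ring

theorem stmt_11 (ε : ℝ) (hε : 0 < ε) (N : ℕ) (hN : 2 ≤ N) :
    ∃ (c : Fin N → ℚ) (a : Fin N → ℤ) (b : Fin N → ℕ),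
      (∀ k, c k ≠ 0) ∧ (∀ k, 0 < |a k| ∧ |a k| < (b k : ℤ)) ∧
      (∑ k, (c k : ℝ) * Real.arctan ((a k : ℝ) / (b k : ℝ))) = Real.pi / 4 ∧
      (∑ k, 1 / Real.logb 10 ((b k : ℝ) / |(a k : ℝ)|)) < ε := by
  have hN0 : (0 : ℝ) < N := by exact_mod_cast (by omega : 0 < N)
  -- Any `m` with `log₁₀ m > N / ε` makes each of the `N` summands smaller than `ε / N`.
  obtain ⟨m₀, hm₀⟩ := exists_nat_gt ((10 : ℝ) ^ (N / ε))
  set m := max m₀ 2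
  have hm : 2 ≤ m := le_max_right _ _
  have hmε : (10 : ℝ) ^ (N / ε) < m :=
    hm₀.trans_le (by exact_mod_cast le_max_left m₀ 2)
  obtain ⟨c, x, hc, hx, hsum⟩ := exists_rat_identity m hm N hN
  have hm0 : (2 : ℚ) ≤ m := by exact_mod_cast hm
  have hnum : ∀ k, 0 < (x k).num := fun k => Rat.num_pos.2 (hx k).1
  refine ⟨c, fun k => (x k).num, fun k => (x k).den, hc, fun k => ⟨abs_pos.2 (hnum k).ne', ?_⟩,
    ?_, ?_⟩
  · rw [abs_of_pos (hnum k)]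
    have : x k < 1 := (hx k).2.trans_lt ((div_lt_one (by linarith)).2 (by linarith))
    simpa using Rat.lt_iff _ _ |>.1 this
  · rw [← hsum]
    simp only [← Rat.cast_def]
  · have hterm : ∀ k ∈ (Finset.univ : Finset (Fin N)),
        1 / Real.logb 10 (((x k).den : ℝ) / |((x k).num : ℝ)|) < ε / N := by
      intro k _
      have hk : (0 : ℝ) < ((x k).num : ℝ) := by exact_mod_cast hnum k
      have hx0 : (0 : ℝ) < x k := by exact_mod_cast (hx k).1
      have hx1 : (x k : ℝ) ≤ 1 / m := by
        have := (Rat.cast_le (K := ℝ)).2 (hx k).2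
        push_cast at this
        exact this
      have hmpos : (0 : ℝ) < m := by positivity
      have e : ((x k).den : ℝ) / |((x k).num : ℝ)| = 1 / (x k : ℝ) := by
        rw [abs_of_pos hk, Rat.cast_def, one_div_div]
      have hle : (m : ℝ) ≤ 1 / (x k : ℝ) := (le_one_div hmpos hx0).2 hx1
      have hlog : N / ε < Real.logb 10 (1 / (x k : ℝ)) :=
        (Real.lt_logb_iff_rpow_lt (by norm_num) (by positivity)).2 (hmε.trans_le hle)
      rw [e, ← one_div_div (N : ℝ) ε]
      exact one_div_lt_one_div_of_lt (by positivity) hlog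
    calc _ < ∑ _k : Fin N, ε / N :=
          Finset.sum_lt_sum_of_nonempty ⟨⟨0, by omega⟩, Finset.mem_univ _⟩ hterm
      _ = ε := by simp; field_simp
end

section
/- For every real number x, arctan(x) = 2·arctan(2x) − arctan(4x³ + 3x). -/
/-! Both differences `arctan (2x) - arctan x` and `arctan (4x³ + 3x) - arctan (2x)` equal
`arctan (x / (1 + 2x²))`, by the subtraction formula for the arctangent. In the second one this uses
the factorization `1 + 2x(4x³ + 3x) = (1 + 4x²)(1 + 2x²)`, whose first factor cancels against the
numerator `4x³ + x = x(1 + 4x²)`. The subtraction formula needs no correction by `π` here, since in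
each pair the two arguments have a nonnegative product. -/

theorem stmt_12 (x : ℝ) :
    Real.arctan x = 2 * Real.arctan (2 * x) - Real.arctan (4 * x ^ 3 + 3 * x) := by
  have h₁ : Real.arctan (2 * x) + Real.arctan (-x) = Real.arctan (x / (1 + 2 * x ^ 2)) := by
    rw [Real.arctan_add (by nlinarith [sq_nonneg x])]
    congr 1
    ring
  have h₂ : Real.arctan (4 * x ^ 3 + 3 * x) + Real.arctan (-(2 * x)) =
      Real.arctan (x / (1 + 2 * x ^ 2)) := by
    rw [Real.arctan_add (by nlinarith [sq_nonneg x, sq_nonneg (x ^ 2)])]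
    congr 1
    have hd : 1 - (4 * x ^ 3 + 3 * x) * -(2 * x) = (1 + 4 * x ^ 2) * (1 + 2 * x ^ 2) := by ring
    have hn : 4 * x ^ 3 + 3 * x + -(2 * x) = (1 + 4 * x ^ 2) * x := by ring
    rw [hd, hn, mul_div_mul_left _ _ (by positivity)]
  rw [Real.arctan_neg] at h₁ h₂
  linarith
end

section
/- Let φ = (1+√5)/2 be the golden ratio. Let a, b be nonzero rational numbers and κ, ℓ nonzero integers with |κ| ≥ |ℓ| and κ + ℓ ≠ 0. If a·arctan(φ^κ) + b·arctan(φ^ℓ) = π/4, then the quadruple (a, b, κ, ℓ) is one of the following sixteen: (1/3, 1/3, 3, 1), (1, 1, −3, −1), (−1, 1, −3, 1), (1, −1, 3, −1), (1/5, 2/5, 6, 2), (1, 2, −6, −2), (−1/3, 2/3, −6, 2), (1, −2, 6, −2), (1/7, 3/7, 5, 3), (1, 3, −5, −3), (−1/5, 3/5, −5, 3), (1, −3, 5, −3), (−1/2, 3/2, 5, 1), (−1/2, 3/2, −5, −1), (1/4, 3/4, −5, 1), (1/4, 3/4, 5, −1). -/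
/-!
Write `θ k = arctan (φ ^ k)`. Since `arctan (x⁻¹) = π / 2 - arctan x` for `x > 0`, everything reduces
to rational relations `a θ_k + b θ_l ∈ ℚ π` with `1 ≤ l ≤ k`.

Let `D k = φ ^ (2 k) + φ ^ (-2 k) + 2`, an integer (`lucasShift`); it is `L_k ^ 2` for even `k` and
`5 F_k ^ 2` for odd `k`, and the norm `(1 + i φ ^ k) (1 - i φ ^ k) = 1 + φ ^ (2 k)` has square
`φ ^ (2 k) D k`.
Clearing denominators, the relation exponentiates to a multiplicative relation between the numbers
`1 ± i φ ^ k` and `1 ± i φ ^ l` in the ring of algebraic integers. Reduce it modulo a maximal ideal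
over an odd prime `p`. If `p ∣ D k`, exactly one of `1 ± i φ ^ k` vanishes (their sum is `2`), and the
relation then forces `b ≠ 0` and one of `1 ± i φ ^ l` to vanish, that is `p ∣ D l`: this is `transfer`.
As `D k` always has an odd prime factor, no `θ k` is a rational multiple of `π`
(`arctan_irrational`), and if both coefficients are nonzero then `D k` and `D l` have the same odd
prime factors.

The second condition leaves few pairs `l < k` (`index_classification`). With `g = gcd k l`, the
quotients `k / g` and `l / g` are odd and every odd prime factor of `D k` divides `D g`. If an odd
prime `q = 2 n + 1` divides `k / g`, then `D (g q) = D g * E ^ 2` with `E = oddQuot (D g) n`, and the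
congruences for `E` modulo `D g` and `(D g) ^ 2`, with the residues of `D` modulo `8` and `9`, show
`E ∣ 2 q`. As `E` grows like `(D g) ^ n`, only `(g, q) = (1, 3), (1, 5), (2, 3)` survive
(`small_index`), and the products of two such primes are excluded by explicit prime factors.
The remaining pairs are `(3, 1), (5, 1), (5, 3), (6, 2)`. Each carries an explicit relation, unique
up to scaling by `arctan_irrational`, so each choice of signs of `κ, ℓ` yields exactly one `(a, b)`.
-/

/-! ### The integers `φ ^ (2 n) + φ ^ (-2 n) + 2` -/

/-- The integer `φ ^ (2 n) + φ ^ (-2 n) + 2 = L_{2 n} + 2`, given by its linear recurrence. -/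
def lucasShift : ℕ → ℤ
  | 0 => 4
  | 1 => 5
  | n + 2 => 3 * lucasShift (n + 1) - lucasShift n - 2

/-- With `d = X + X⁻¹ + 2`, the number `∑ (-X) ^ j` over `-n ≤ j ≤ n`, as a polynomial in `d`. -/
def oddQuot (d : ℤ) : ℕ → ℤ
  | 0 => 1
  | 1 => 3 - d
  | n + 2 => (2 - d) * oddQuot d (n + 1) - oddQuot d n

/-- In any commutative ring, `u` and `v` play the roles of `φ ^ 2` and `φ ^ (-2)`. -/
theorem lucasShift_cast {R : Type*} [CommRing R] {u v : R} (huv : u * v = 1) (hs : u + v = 3) :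
    ∀ n : ℕ, (lucasShift n : R) = u ^ n + v ^ n + 2
  | 0 => by norm_num [lucasShift]
  | 1 => by
    simp only [lucasShift, pow_one, hs]
    norm_num
  | n + 2 => by
    have h0 := lucasShift_cast huv hs n
    have h1 := lucasShift_cast huv hs (n + 1)
    simp only [lucasShift]
    push_cast
    rw [h0, h1, ← hs]
    linear_combination (u ^ n + v ^ n) * huv + 2 * hs

theorem pow_mul_lucasShift {R : Type*} [CommRing R] {u v : R} (huv : u * v = 1) (hs : u + v = 3)
    (n : ℕ) : u ^ n * (lucasShift n : R) = (u ^ n + 1) ^ 2 := by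
  rw [lucasShift_cast huv hs]
  have : u ^ n * v ^ n = 1 := by rw [← mul_pow, huv, one_pow]
  linear_combination this

/-- Geometric sum formula for `oddQuot`, with denominators cleared. -/
theorem oddQuot_cast {R : Type*} [CommRing R] {X Y : R} (hXY : X * Y = 1) {d : ℤ}
    (hd : (d : R) = X + Y + 2) :
    ∀ n : ℕ, (oddQuot d n : R) * (X + 1) * X ^ n = (-1) ^ n * (X ^ (2 * n + 1) + 1)
  | 0 => by simp [oddQuot]
  | 1 => by
    simp only [oddQuot]
    push_cast
    rw [hd]
    linear_combination (-X - 1) * hXY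
  | n + 2 => by
    have h0 := oddQuot_cast hXY hd n
    have h1 := oddQuot_cast hXY hd (n + 1)
    simp only [oddQuot]
    push_cast
    rw [hd]
    have e : (2 - (X + Y + 2)) * X = - X ^ 2 - 1 := by linear_combination -hXY
    have : ((2 - (X + Y + 2)) * (oddQuot d (n + 1) : R) - (oddQuot d n : R)) * (X + 1) * X ^ (n + 2)
      = ((2 - (X + Y + 2)) * X) * ((oddQuot d (n + 1) : R) * (X + 1) * X ^ (n + 1))
        - X ^ 2 * ((oddQuot d n : R) * (X + 1) * X ^ n) := by ring
    rw [this, h0, h1, e]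
    ring

theorem lucasShift_mul (g n : ℕ) :
    lucasShift (g * (2 * n + 1)) = lucasShift g * oddQuot (lucasShift g) n ^ 2 := by
  have h5 : (Real.sqrt 5) ^ 2 = 5 := Real.sq_sqrt (by norm_num)
  obtain ⟨u, hu⟩ : ∃ u : ℝ, u = (3 + Real.sqrt 5) / 2 := ⟨_, rfl⟩
  have huv : u * (3 - u) = 1 := by rw [hu]; linear_combination (-1 / 4) * h5
  have hs : u + (3 - u) = 3 := by ring
  have hu0 : u ≠ 0 := by rintro h; simp [h] at huv
  have hXY : u ^ g * (3 - u) ^ g = 1 := by rw [← mul_pow, huv, one_pow]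
  have h1 := oddQuot_cast hXY (lucasShift_cast huv hs g) n
  have h2 := pow_mul_lucasShift huv hs g
  have h3 := pow_mul_lucasShift huv hs (g * (2 * n + 1))
  rw [pow_mul] at h3
  set X := u ^ g
  have hX : X ^ (2 * n + 1) ≠ 0 := by positivity
  have key : X ^ (2 * n + 1) * (lucasShift (g * (2 * n + 1)) : ℝ) =
      X ^ (2 * n + 1) * ((lucasShift g : ℝ) * (oddQuot (lucasShift g) n : ℝ) ^ 2) := by
    have hone : ((-1 : ℝ) ^ n) ^ 2 = 1 := by rw [← pow_mul, mul_comm, pow_mul]; norm_num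
    have h4 := congrArg (· ^ 2) h1
    simp only [mul_pow, hone] at h4
    rw [h3]
    linear_combination -h4 - (oddQuot (lucasShift g) n : ℝ) ^ 2 * X ^ (2 * n) * h2
  exact_mod_cast mul_left_cancel₀ hX key

theorem lucasShift_lt (n : ℕ) : 4 ≤ lucasShift n ∧ lucasShift n < lucasShift (n + 1) := by
  induction n with
  | zero => simp [lucasShift]
  | succ n ih =>
    have : lucasShift (n + 1 + 1) = 3 * lucasShift (n + 1) - lucasShift n - 2 := rfl
    omega

theorem lucasShift_mono : StrictMono lucasShift :=
  strictMono_nat_of_lt_succ fun n => (lucasShift_lt n).2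

theorem lucasShift_mod_eight (n : ℕ) :
    lucasShift n % 8 = 4 ∨ lucasShift n % 8 = 5 ∨ lucasShift n % 8 = 1 := by
  have : ∀ n, (lucasShift n % 8 = 4 ∧ lucasShift (n + 1) % 8 = 5) ∨
      (lucasShift n % 8 = 5 ∧ lucasShift (n + 1) % 8 = 1) ∨
      (lucasShift n % 8 = 1 ∧ lucasShift (n + 1) % 8 = 4) ∨
      (lucasShift n % 8 = 4 ∧ lucasShift (n + 1) % 8 = 1) ∨
      (lucasShift n % 8 = 1 ∧ lucasShift (n + 1) % 8 = 5) ∨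
      (lucasShift n % 8 = 5 ∧ lucasShift (n + 1) % 8 = 4) := by
    intro n
    induction n with
    | zero => simp [lucasShift]
    | succ n ih =>
      have : lucasShift (n + 1 + 1) = 3 * lucasShift (n + 1) - lucasShift n - 2 := rfl
      rcases ih with h | h | h | h | h | h <;> omega
  have := this n
  omega

theorem three_dvd_lucasShift (n : ℕ) (h : 3 ∣ lucasShift n) : n % 4 = 2 := by
  induction n using Nat.strong_induction_on with
  | _ n ih =>
    match n, h, ih with
    | 0, h, _ => norm_num [lucasShift] at h
    | 1, h, _ => norm_num [lucasShift] at h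
    | 2, h, _ => rfl
    | 3, h, _ => norm_num [lucasShift] at h
    | m + 4, h, ih =>
      have h2 : lucasShift (m + 2) = 3 * lucasShift (m + 1) - lucasShift m - 2 := rfl
      have h3 : lucasShift (m + 3) = 3 * lucasShift (m + 2) - lucasShift (m + 1) - 2 := rfl
      have h4 : lucasShift (m + 4) = 3 * lucasShift (m + 3) - lucasShift (m + 2) - 2 := rfl
      have := ih m (by omega) (by omega)
      omega

/-- Divisibility by `3` forces `n` to be an odd multiple of `2`, and `lucasShift 2 = 9`. -/
theorem nine_dvd_lucasShift (n : ℕ) (h : 3 ∣ lucasShift n) : 9 ∣ lucasShift n := by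
  have h4 := three_dvd_lucasShift n h
  obtain ⟨m, rfl⟩ : ∃ m, n = 2 * (2 * m + 1) := ⟨n / 4, by omega⟩
  rw [lucasShift_mul]
  exact Dvd.intro _ rfl

/-- An even value of `lucasShift` is `4` modulo `8` and the values at `k ≥ 1` are at least `5`, so
none of them is a power of two. -/
theorem exists_odd_prime_dvd (k : ℕ) (hk : 1 ≤ k) :
    ∃ p : ℕ, p.Prime ∧ p ≠ 2 ∧ (p : ℤ) ∣ lucasShift k := by
  have h5 : 5 ≤ lucasShift k := lucasShift_mono.monotone hk
  have h8 := lucasShift_mod_eight k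
  obtain ⟨N, hN⟩ : ∃ N : ℕ, lucasShift k = N := ⟨(lucasShift k).toNat, by omega⟩
  rw [hN] at h5 h8 ⊢
  by_cases h2 : N % 4 = 0
  · obtain ⟨c, rfl⟩ : 4 ∣ N := by omega
    refine ⟨c.minFac, Nat.minFac_prime (by omega), fun h => ?_, ?_⟩
    · have := h ▸ Nat.minFac_dvd c
      omega
    · exact_mod_cast (Nat.minFac_dvd c).trans (Dvd.intro_left _ rfl)
  · refine ⟨N.minFac, Nat.minFac_prime (by omega), fun h => ?_, ?_⟩
    · have := h ▸ Nat.minFac_dvd N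
      omega
    · exact_mod_cast Nat.minFac_dvd N

theorem oddQuot_modEq (d : ℤ) : ∀ n : ℕ, d ∣ oddQuot d n - (2 * n + 1)
  | 0 => by simp [oddQuot]
  | 1 => by simp [oddQuot]
  | n + 2 => by
    obtain ⟨a, ha⟩ := oddQuot_modEq d n
    obtain ⟨b, hb⟩ := oddQuot_modEq d (n + 1)
    refine ⟨2 * b - a - oddQuot d (n + 1), ?_⟩
    simp only [oddQuot]
    push_cast at hb ⊢
    linear_combination 2 * hb - ha

theorem six_oddQuot_modEq (d : ℤ) :
    ∀ n : ℕ, d ^ 2 ∣ 6 * oddQuot d n - (2 * n + 1) * (6 - n * (n + 1) * d)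
  | 0 => by simp [oddQuot]
  | 1 => by exact ⟨0, by simp only [oddQuot]; push_cast; ring⟩
  | n + 2 => by
    obtain ⟨a, ha⟩ := six_oddQuot_modEq d n
    obtain ⟨b, hb⟩ := six_oddQuot_modEq d (n + 1)
    refine ⟨2 * b - a - d * b + ((2 * (n + 1) + 1) * ((n + 1) * (n + 2))), ?_⟩
    simp only [oddQuot]
    push_cast at hb ⊢
    linear_combination (2 - d) * hb - ha

/-- The first inequality is the lower bound; the second says that the absolute values grow by a
factor of at least `d - 3` at each step. -/
theorem oddQuot_growth {d : ℤ} (hd : 5 ≤ d) (n : ℕ) :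
    (d - 3) ^ n ≤ (-1) ^ n * oddQuot d n ∧
      (d - 3) * ((-1) ^ n * oddQuot d n) ≤ (-1) ^ (n + 1) * oddQuot d (n + 1) := by
  induction n with
  | zero => simp [oddQuot]
  | succ n ih =>
    obtain ⟨h1, h2⟩ := ih
    have e : (-1) ^ (n + 1 + 1) * oddQuot d (n + 1 + 1) =
        (d - 2) * ((-1) ^ (n + 1) * oddQuot d (n + 1)) - (-1) ^ n * oddQuot d n := by
      simp only [oddQuot]; ring
    have hp : (0 : ℤ) < (d - 3) ^ n := by have : 0 < d - 3 := by omega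
                                          positivity
    rw [e]
    set x := (-1) ^ n * oddQuot d n
    set y := (-1) ^ (n + 1) * oddQuot d (n + 1)
    constructor
    · rw [pow_succ]; nlinarith
    · nlinarith

/-- If passing from index `g` to `g q`, with `q = 2 n + 1` an odd prime, brings in no new odd prime
factor, then `(g, q)` is `(1, 3)`, `(1, 5)` or `(2, 3)`: the quotient `oddQuot (lucasShift g) n`
divides `2 q`, which contradicts its growth otherwise. -/
theorem small_index {g n : ℕ} (hg : 1 ≤ g) (hn : 1 ≤ n) (hq : (2 * n + 1).Prime)
    (h : ∀ p : ℕ, p.Prime → p ≠ 2 → (p : ℤ) ∣ lucasShift (g * (2 * n + 1)) →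
      (p : ℤ) ∣ lucasShift g) :
    (g = 1 ∧ n = 1) ∨ (g = 1 ∧ n = 2) ∨ (g = 2 ∧ n = 1) := by
  have hd5 : 5 ≤ lucasShift g := lucasShift_mono.monotone hg
  have hmul := lucasShift_mul g n
  have hprime : ∀ p : ℕ, p.Prime → p ≠ 2 → (p : ℤ) ∣ oddQuot (lucasShift g) n →
      p = 2 * n + 1 ∧ (p : ℤ) ∣ lucasShift g := by
    intro p hp h2 hpe
    have h3 : (p : ℤ) ∣ lucasShift g :=
      h p hp h2 (hmul ▸ Dvd.dvd.mul_left (dvd_pow hpe two_ne_zero) _)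
    have h4 := dvd_sub hpe (h3.trans (oddQuot_modEq (lucasShift g) n))
    have h5 : p ∣ 2 * n + 1 := by
      rw [sub_sub_cancel] at h4
      exact_mod_cast h4
    exact ⟨(Nat.prime_dvd_prime_iff_eq hp hq).1 h5, h3⟩
  -- The prime `2` is controlled modulo `8`, and `q` by `q ^ 2 ∤ oddQuot`.
  have hdvd : (oddQuot (lucasShift g) n).natAbs ∣ 2 * (2 * n + 1) := by
    rw [Nat.dvd_iff_prime_pow_dvd_dvd]
    intro p k hp hpk
    rcases Nat.lt_or_ge k 2 with hk | hk
    · interval_cases k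
      · simp
      · rw [pow_one] at hpk ⊢
        rcases eq_or_ne p 2 with rfl | h2
        · exact Dvd.intro _ rfl
        · rw [(hprime p hp h2 (Int.natCast_dvd.2 hpk)).1]
          exact Dvd.intro_left _ rfl
    · exfalso
      have hsq : ((p ^ 2 : ℕ) : ℤ) ∣ oddQuot (lucasShift g) n :=
        Int.natCast_dvd.2 ((pow_dvd_pow p hk).trans hpk)
      rcases eq_or_ne p 2 with rfl | h2
      · obtain ⟨c, hc⟩ := hsq
        have h8 := lucasShift_mod_eight (g * (2 * n + 1))
        rw [hmul, hc] at h8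
        have : lucasShift g * (((2 ^ 2 : ℕ) : ℤ) * c) ^ 2 = 8 * (2 * lucasShift g * c ^ 2) := by
          push_cast; ring
        omega
      · push_cast at hsq
        obtain ⟨hpq, hpd⟩ := hprime p hp h2 ((dvd_pow_self _ two_ne_zero).trans hsq)
        rcases eq_or_ne p 3 with rfl | h3
        · obtain rfl : n = 1 := by omega
          have := nine_dvd_lucasShift g (by exact_mod_cast hpd)
          simp only [oddQuot] at hsq
          omega
        -- Modulo `p ^ 2` the second-order congruence becomes `6 * oddQuot ≡ 6 p`.
        · have h6 := (pow_dvd_pow_of_dvd hpd 2).trans (six_oddQuot_modEq (lucasShift g) n)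
          have h7 : (p : ℤ) ^ 2 ∣ p * 6 := by
            have e : (2 * n + 1 : ℤ) = p := by rw [hpq]; push_cast; ring
            rw [e] at h6
            have h8 : (p : ℤ) ^ 2 ∣ p * (n * (n + 1) * lucasShift g) := by
              rw [sq]; exact mul_dvd_mul_left _ (hpd.mul_left _)
            have := dvd_add (dvd_sub (hsq.mul_left 6) h6) h8
            have e2 : (p : ℤ) * 6 = 6 * oddQuot (lucasShift g) n -
                (6 * oddQuot (lucasShift g) n - p * (6 - n * (n + 1) * lucasShift g)) +
                p * (n * (n + 1) * lucasShift g) := by ring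
            rwa [e2]
          rw [sq] at h7
          have h9 : (p : ℤ) ∣ 6 := Int.dvd_of_mul_dvd_mul_left (by exact_mod_cast hp.ne_zero) h7
          have h10 : p ∣ 2 * 3 := by exact_mod_cast h9
          rcases (Nat.Prime.dvd_mul hp).1 h10 with h | h
          · exact h2 ((Nat.prime_dvd_prime_iff_eq hp Nat.prime_two).1 h)
          · exact h3 ((Nat.prime_dvd_prime_iff_eq hp Nat.prime_three).1 h)
  have hle : (lucasShift g - 3) ^ n ≤ 4 * n + 2 := by
    have h1 := (oddQuot_growth hd5 n).1
    have h2 : (-1) ^ n * oddQuot (lucasShift g) n ≤ ((oddQuot (lucasShift g) n).natAbs : ℤ) := by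
      rcases neg_one_pow_eq_or ℤ n with h | h <;> rw [h] <;> omega
    have h3 := Nat.le_of_dvd (by omega) hdvd
    omega
  rcases (show g = 1 ∨ g = 2 ∨ 3 ≤ g by omega) with rfl | rfl | hg3
  · have hn4 : n ≤ 4 := by
      by_contra! hcon
      have : ∀ m : ℕ, 5 ≤ m → (4 * m + 2 : ℤ) < 2 ^ m := by
        intro m hm
        induction m, hm using Nat.le_induction with
        | base => norm_num
        | succ m hm ih => rw [pow_succ]; push_cast; omega
      have h1 := this n hcon
      have h2 : lucasShift 1 - 3 = 2 := rfl
      rw [h2] at hle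
      omega
    interval_cases n
    · simp
    · simp
    -- For `q = 7` the size bound is not enough: the quotient is `-13`, which does not divide `14`.
    · norm_num [lucasShift, oddQuot] at hdvd
    · norm_num at hq
  · right; right
    refine ⟨rfl, ?_⟩
    by_contra hne
    obtain ⟨m, rfl⟩ : ∃ m, n = m + 2 := ⟨n - 2, by omega⟩
    norm_num [lucasShift] at hle
    have := one_add_mul_le_pow (show (-2 : ℤ) ≤ 5 by norm_num) m
    rw [pow_add] at hle
    norm_num at this hle
    omega
  · exfalso
    have h20 : 20 ≤ lucasShift g := lucasShift_mono.monotone hg3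
    have h1 : (17 : ℤ) ^ n ≤ (lucasShift g - 3) ^ n := by gcongr; omega
    have := one_add_mul_le_pow (show (-2 : ℤ) ≤ 16 by norm_num) n
    norm_num at this
    omega

/-! ### From arctangents to a multiplicative relation -/

open Real in
theorem one_add_mul_I (x : ℝ) :
    (1 + x * Complex.I) = (1 - x * Complex.I) * Complex.exp (2 * (arctan x : ℝ) * Complex.I) := by
  have hc : (Complex.cos (arctan x : ℝ)) ≠ 0 := by
    rw [← Complex.ofReal_cos]
    exact_mod_cast (cos_arctan_pos x).ne'
  have hs : Complex.sin (arctan x : ℝ) = x * Complex.cos (arctan x : ℝ) := by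
    rw [← Complex.ofReal_cos, ← Complex.ofReal_sin, ← Complex.ofReal_mul]
    congr 1
    have := tan_mul_cos (cos_arctan_pos x).ne'
    rw [tan_arctan] at this
    exact this.symm
  have h1 := Complex.exp_mul_I (arctan x : ℝ)
  have h2 : 2 * ((arctan x : ℝ) : ℂ) * Complex.I =
    (arctan x : ℝ) * Complex.I + (arctan x : ℝ) * Complex.I := by ring
  have h3 := Complex.sin_sq_add_cos_sq (arctan x : ℝ)
  rw [h2, Complex.exp_add, h1]
  rw [hs] at h3 ⊢
  apply mul_right_cancel₀ hc
  set c := Complex.cos (arctan x : ℝ)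
  linear_combination (-c - x * Complex.I * c) * h3 + (c ^ 3 * (x ^ 2 + x ^ 3 * Complex.I)) * Complex.I_sq

open Real in
theorem pow_mul_pow_eq {x y : ℝ} {A B : ℕ} {N : ℤ} (h : A * arctan x + B * arctan y = N * π) :
    (1 + x * Complex.I) ^ A * (1 + y * Complex.I) ^ B =
      (1 - x * Complex.I) ^ A * (1 - y * Complex.I) ^ B := by
  rw [one_add_mul_I x, one_add_mul_I y, mul_pow, mul_pow, ← Complex.exp_nat_mul,
    ← Complex.exp_nat_mul]
  have h1 : Complex.exp (A * (2 * (arctan x : ℝ) * Complex.I)) *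
      Complex.exp (B * (2 * (arctan y : ℝ) * Complex.I)) = 1 := by
    rw [← Complex.exp_add, Complex.exp_eq_one_iff]
    refine ⟨N, ?_⟩
    have h' : (A : ℂ) * (arctan x : ℝ) + B * (arctan y : ℝ) = N * (π : ℝ) := by exact_mod_cast h
    linear_combination 2 * Complex.I * h'
  linear_combination ((1 - x * Complex.I) ^ A * (1 - y * Complex.I) ^ B) * h1

/-! ### Reduction modulo a prime of the algebraic integers -/

/-- The field is the quotient by a maximal ideal lying over `p`. -/
theorem exists_residue_field {p : ℕ} (hp : p.Prime) :
    ∃ (F : Type) (_ : Field F) (_ : integralClosure ℤ ℂ →+* F), (p : F) = 0 := by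
  have hmax : (Ideal.span {(p : ℤ)}).IsMaximal :=
    PrincipalIdealRing.isMaximal_of_irreducible (Nat.prime_iff_prime_int.1 hp).irreducible
  obtain ⟨Q, hQ, hQp⟩ := Ideal.exists_ideal_over_maximal_of_isIntegral
    (S := integralClosure ℤ ℂ) (Ideal.span {(p : ℤ)}) (by
      rw [(RingHom.injective_iff_ker_eq_bot _).1 (FaithfulSMul.algebraMap_injective ℤ _)]
      exact bot_le)
  refine ⟨integralClosure ℤ ℂ ⧸ Q, Ideal.Quotient.field Q, Ideal.Quotient.mk Q, ?_⟩
  have h : (p : ℤ) ∈ Q.comap (algebraMap ℤ (integralClosure ℤ ℂ)) := by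
    rw [hQp]; exact Ideal.mem_span_singleton_self _
  have h2 := Ideal.Quotient.eq_zero_iff_mem.2 (Ideal.mem_comap.1 h)
  simpa using h2

theorem intCast_eq_zero_iff {F : Type*} [Field F] {p : ℕ} (hp : p.Prime) (h : (p : F) = 0)
    (n : ℤ) : (n : F) = 0 ↔ (p : ℤ) ∣ n := by
  constructor
  · intro hn
    by_contra hcon
    have hco := (Nat.prime_iff_prime_int.1 hp).irreducible.coprime_iff_not_dvd.2 hcon
    obtain ⟨a, b, hab⟩ := hco
    have := congrArg (Int.cast : ℤ → F) hab
    push_cast at this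
    rw [hn, h] at this
    simp at this
  · rintro ⟨c, rfl⟩
    push_cast
    rw [h, zero_mul]

/-- In characteristic `p`, with `u` in the role of `φ ^ 2`, divisibility of `lucasShift k` by `p`
says `u ^ k = -1`. -/
theorem dvd_lucasShift_iff {F : Type*} [Field F] {p : ℕ} (hp : p.Prime) (h : (p : F) = 0)
    {u v : F} (huv : u * v = 1) (hs : u + v = 3) (k : ℕ) :
    (p : ℤ) ∣ lucasShift k ↔ u ^ k + 1 = 0 := by
  have hu : u ≠ 0 := by rintro rfl; simp at huv
  rw [← intCast_eq_zero_iff hp h, ← pow_eq_zero_iff (n := 2) two_ne_zero (a := u ^ k + 1),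
    ← pow_mul_lucasShift huv hs k]
  simp [hu]

/-- The golden ratio as an algebraic integer. -/
noncomputable def phiInt : integralClosure ℤ ℂ :=
  ⟨((Real.goldenRatio : ℝ) : ℂ), by
    refine ⟨Polynomial.X ^ 2 - Polynomial.X - 1, by monicity!, ?_⟩
    have : ((Real.goldenRatio : ℝ) : ℂ) ^ 2 = (Real.goldenRatio : ℝ) + 1 := by
      exact_mod_cast Real.goldenRatio_sq
    generalize ((Real.goldenRatio : ℝ) : ℂ) = z at this ⊢
    simp [this]⟩

/-- The imaginary unit as an algebraic integer. -/
noncomputable def iInt : integralClosure ℤ ℂ :=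
  ⟨Complex.I, by
    refine ⟨Polynomial.X ^ 2 + 1, by monicity!, ?_⟩
    simp⟩

theorem phiInt_sq : phiInt ^ 2 = phiInt + 1 := by
  apply Subtype.ext
  have : ((Real.goldenRatio : ℝ) : ℂ) ^ 2 = (Real.goldenRatio : ℝ) + 1 := by
    exact_mod_cast Real.goldenRatio_sq
  simpa [phiInt] using this

theorem iInt_sq : iInt ^ 2 = -1 := by
  apply Subtype.ext
  simp [iInt]

/-- A residue field of characteristic `p`; the last equation says that `φ ^ 2` is inverse to
`3 - φ ^ 2`. -/
theorem exists_field {p : ℕ} (hp : p.Prime) :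
    ∃ (F : Type) (_ : Field F) (f : integralClosure ℤ ℂ →+* F), (p : F) = 0 ∧
      (f phiInt ^ 2) * (3 - f phiInt ^ 2) = 1 := by
  obtain ⟨F, _, f, hf⟩ := exists_residue_field hp
  refine ⟨F, _, f, hf, ?_⟩
  have h := congrArg f phiInt_sq
  simp only [map_pow, map_add, map_one] at h
  linear_combination (1 - f phiInt ^ 2 - f phiInt) * h

/-- If `u ^ k = u ^ l = -1` and `g = gcd k l`, then `u ^ (2 g) = 1`, so `u ^ g = ±1`; the sign must be
`-1`, and `k / g` must be odd. -/
theorem dvd_lucasShift_gcd {p : ℕ} (hp : p.Prime) (h2 : p ≠ 2) {k l : ℕ}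
    (hk : (p : ℤ) ∣ lucasShift k) (hl : (p : ℤ) ∣ lucasShift l) :
    (p : ℤ) ∣ lucasShift (k.gcd l) ∧ (k / k.gcd l) % 2 = 1 := by
  obtain ⟨F, _, f, hpF, huv⟩ := exists_field hp
  have h2F : (2 : F) ≠ 0 := by
    intro h
    have := (intCast_eq_zero_iff hp hpF 2).1 (by exact_mod_cast h)
    have h3 : p ∣ 2 := by exact_mod_cast this
    exact h2 ((Nat.prime_dvd_prime_iff_eq hp Nat.prime_two).1 h3)
  generalize f phiInt ^ 2 = u at huv
  have key := fun n => dvd_lucasShift_iff hp hpF huv (by ring) n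
  rw [key] at hk hl ⊢
  have hk' : u ^ k = -1 := eq_neg_of_add_eq_zero_left hk
  have hl' : u ^ l = -1 := eq_neg_of_add_eq_zero_left hl
  have hg : (u ^ k.gcd l) ^ 2 = 1 := by
    rw [← pow_mul, ← orderOf_dvd_iff_pow_eq_one, mul_comm, ← Nat.gcd_mul_left]
    refine Nat.dvd_gcd ?_ ?_ <;> rw [orderOf_dvd_iff_pow_eq_one, mul_comm, pow_mul]
    · rw [hk']; norm_num
    · rw [hl']; norm_num
  have hkg : u ^ k = (u ^ k.gcd l) ^ (k / k.gcd l) := by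
    rw [← pow_mul, Nat.mul_div_cancel' (Nat.gcd_dvd_left k l)]
  have hne : (1 : F) ≠ -1 := by
    intro h
    apply h2F
    linear_combination h
  rcases mul_self_eq_one_iff.1 (sq (u ^ k.gcd l) ▸ hg) with h1 | h1
  · rw [h1, one_pow, hk'] at hkg
    exact absurd hkg.symm hne
  · refine ⟨by rw [h1]; ring, ?_⟩
    by_contra hcon
    have hev : Even (k / k.gcd l) := by
      rw [Nat.even_iff]; omega
    rw [h1, hev.neg_one_pow, hk'] at hkg
    exact hne hkg.symm

theorem dvd_lucasShift_of_odd_mul {p : ℕ} {k : ℕ} (hk : (p : ℤ) ∣ lucasShift k) {m : ℕ}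
    (hm : m % 2 = 1) : (p : ℤ) ∣ lucasShift (k * m) := by
  obtain ⟨n, rfl⟩ : ∃ n, m = 2 * n + 1 := ⟨m / 2, by omega⟩
  rw [lucasShift_mul]
  exact hk.mul_right _

open Real in
/-- The case of natural number coefficients; the sign `δ` accounts for a negative coefficient, since
`arctan` is odd. -/
theorem transfer_aux {k l A B : ℕ} {N : ℤ} (hA : A ≠ 0) {δ : ℤ} (hδ : δ ^ 2 = 1)
    (h : A * arctan (goldenRatio ^ k) + B * arctan (δ * goldenRatio ^ l) = N * π)
    {p : ℕ} (hp : p.Prime) (h2 : p ≠ 2) (hk : (p : ℤ) ∣ lucasShift k) :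
    B ≠ 0 ∧ (p : ℤ) ∣ lucasShift l := by
  have hO : (1 + phiInt ^ k * iInt) ^ A * (1 + δ * phiInt ^ l * iInt) ^ B =
      (1 - phiInt ^ k * iInt) ^ A * (1 - δ * phiInt ^ l * iInt) ^ B := by
    apply Subtype.ext
    have := pow_mul_pow_eq h
    push_cast at this
    simpa [phiInt, iInt] using this
  obtain ⟨F, _, f, hpF, huv⟩ := exists_field hp
  have h2F : (2 : F) ≠ 0 := by
    intro h
    have := (intCast_eq_zero_iff hp hpF 2).1 (by exact_mod_cast h)
    have h3 : p ∣ 2 := by exact_mod_cast this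
    exact h2 ((Nat.prime_dvd_prime_iff_eq hp Nat.prime_two).1 h3)
  have key := fun n => dvd_lucasShift_iff hp hpF huv (by ring) n
  rw [key] at hk ⊢
  have hF := congrArg f hO
  have hi := congrArg f iInt_sq
  have hδF : (δ : F) ^ 2 = 1 := by exact_mod_cast congrArg (Int.cast : ℤ → F) hδ
  simp only [map_mul, map_pow, map_add, map_sub, map_one, map_intCast, map_neg] at hF hi
  generalize f phiInt = t at *
  generalize f iInt = j at *
  have hxx : (1 + t ^ k * j) * (1 - t ^ k * j) = 0 := by
    rw [← hk]; linear_combination (-(t ^ k) ^ 2) * hi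
  have hyy : (1 + δ * t ^ l * j) * (1 - δ * t ^ l * j) = (t ^ 2) ^ l + 1 := by
    linear_combination (-(δ : F) ^ 2 * (t ^ l) ^ 2) * hi + (t ^ l) ^ 2 * hδF
  rw [← hyy]
  rcases mul_eq_zero.1 hxx with h0 | h0
  · have h1 : (1 - t ^ k * j) ≠ 0 := fun h1 => h2F (by linear_combination h0 + h1)
    rw [h0, zero_pow hA, zero_mul, eq_comm, mul_eq_zero] at hF
    have hF' := pow_eq_zero_iff'.1 (hF.resolve_left (pow_ne_zero _ h1))
    exact ⟨hF'.2, by rw [hF'.1, mul_zero]⟩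
  · have h1 : (1 + t ^ k * j) ≠ 0 := fun h1 => h2F (by linear_combination h0 + h1)
    rw [h0, zero_pow hA, zero_mul, mul_eq_zero] at hF
    have hF' := pow_eq_zero_iff'.1 (hF.resolve_left (pow_ne_zero _ h1))
    exact ⟨hF'.2, by rw [hF'.1, zero_mul]⟩

open Real in
/-- A rational relation carries odd prime divisors of `lucasShift k` over to `lucasShift l`. The case
`b = 0` is thereby excluded. -/
theorem transfer {k l : ℕ} {a b c : ℚ} (ha : a ≠ 0)
    (h : a * arctan (goldenRatio ^ k) + b * arctan (goldenRatio ^ l) = c * π)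
    {p : ℕ} (hp : p.Prime) (h2 : p ≠ 2) (hk : (p : ℤ) ∣ lucasShift k) :
    b ≠ 0 ∧ (p : ℤ) ∣ lucasShift l := by
  -- Clear denominators and normalise the first coefficient to be positive.
  obtain ⟨A, B, N, hA, hB, hI⟩ : ∃ (A : ℕ) (B N : ℤ), A ≠ 0 ∧ (b = 0 → B = 0) ∧
      A * arctan (goldenRatio ^ k) + B * arctan (goldenRatio ^ l) = N * π := by
    have hsc : ((a.num * a.num.sign * b.den * c.den : ℤ) : ℝ) * arctan (goldenRatio ^ k) +
        ((b.num * a.num.sign * a.den * c.den : ℤ) : ℝ) * arctan (goldenRatio ^ l) =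
        ((c.num * a.num.sign * a.den * b.den : ℤ) : ℝ) * π := by
      have e1 : (a : ℝ) * a.den = a.num := by exact_mod_cast Rat.mul_den_eq_num a
      have e2 : (b : ℝ) * b.den = b.num := by exact_mod_cast Rat.mul_den_eq_num b
      have e3 : (c : ℝ) * c.den = c.num := by exact_mod_cast Rat.mul_den_eq_num c
      push_cast
      rw [← e1, ← e2, ← e3]
      linear_combination ((a.num.sign : ℤ) * a.den * b.den * c.den : ℝ) * h
    refine ⟨a.num.natAbs * b.den * c.den, b.num * a.num.sign * a.den * c.den,
      c.num * a.num.sign * a.den * b.den, ?_, ?_, ?_⟩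
    rotate_left 2
    · rw [← hsc, Int.mul_sign_self]
      push_cast [Nat.cast_natAbs]
      ring
    · simp [ha]
    · intro hb; simp [hb]
  rcases le_total 0 B with hB0 | hB0
  · lift B to ℕ using hB0
    have := transfer_aux (δ := 1) (B := B) hA (by norm_num) (by simpa using hI) hp h2 hk
    exact ⟨fun hb => this.1 (by exact_mod_cast hB hb), this.2⟩
  · obtain ⟨C, rfl⟩ : ∃ C : ℕ, B = -C := ⟨B.natAbs, by omega⟩
    have := transfer_aux (δ := -1) (B := C) (l := l) (N := N) hA (by norm_num)
      (by push_cast at hI ⊢; rw [neg_one_mul, arctan_neg]; linear_combination hI) hp h2 hk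
    exact ⟨fun hb => this.1 (by simpa using hB hb), this.2⟩

open Real in
/-- For `k ≥ 1`, `arctan (φ ^ k)` is not a rational multiple of `π`. -/
theorem arctan_irrational {k : ℕ} (hk : 1 ≤ k) {a c : ℚ}
    (h : a * arctan (goldenRatio ^ k) = c * π) : a = 0 := by
  by_contra ha
  obtain ⟨p, hp, h2, hpk⟩ := exists_odd_prime_dvd k hk
  exact (transfer (l := k) (b := 0) ha (by simpa using h) hp h2 hpk).1 rfl

/-! ### Classification of the indices -/

/-- The pairs `l < k` for which `lucasShift` has the same odd prime factors at `k` and `l`. -/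
theorem index_classification {k l : ℕ} (hl : 1 ≤ l) (hlk : l < k)
    (h : ∀ p : ℕ, p.Prime → p ≠ 2 → ((p : ℤ) ∣ lucasShift k ↔ (p : ℤ) ∣ lucasShift l)) :
    (k = 3 ∧ l = 1) ∨ (k = 6 ∧ l = 2) ∨ (k = 5 ∧ l = 3) ∨ (k = 5 ∧ l = 1) := by
  have hg1 : 1 ≤ k.gcd l := Nat.gcd_pos_of_pos_right _ hl
  obtain ⟨p, hp, h2, hpl⟩ := exists_odd_prime_dvd l hl
  have hpk := (h p hp h2).2 hpl
  have hkodd := (dvd_lucasShift_gcd hp h2 hpk hpl).2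
  have hlodd := (dvd_lucasShift_gcd hp h2 hpl hpk).2
  rw [Nat.gcd_comm] at hlodd
  have hdown : ∀ p : ℕ, p.Prime → p ≠ 2 → (p : ℤ) ∣ lucasShift k →
      (p : ℤ) ∣ lucasShift (k.gcd l) := fun p hp h2 hpk =>
    (dvd_lucasShift_gcd hp h2 hpk ((h p hp h2).1 hpk)).1
  obtain ⟨m, hm⟩ := Nat.gcd_dvd_left k l
  obtain ⟨r, hr⟩ := Nat.gcd_dvd_right k l
  generalize k.gcd l = g at *
  subst hm hr
  rw [Nat.mul_div_cancel_left _ hg1] at hkodd hlodd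
  have hrm : r < m := lt_of_mul_lt_mul_left hlk (by omega)
  -- Every divisor of the odd number `m` yields an intermediate index with the same primes.
  have hdiv : ∀ s t : ℕ, m = s * t → ∀ p : ℕ, p.Prime → p ≠ 2 →
      (p : ℤ) ∣ lucasShift (g * s) → (p : ℤ) ∣ lucasShift g := by
    rintro s t rfl p hp h2 hps
    apply hdown p hp h2
    rw [← mul_assoc]
    apply dvd_lucasShift_of_odd_mul hps
    exact Nat.odd_iff.1 (Nat.odd_mul.1 (Nat.odd_iff.2 hkodd)).2
  have hsmall : ∀ q t : ℕ, q.Prime → m = q * t →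
      (g = 1 ∧ q = 3) ∨ (g = 1 ∧ q = 5) ∨ (g = 2 ∧ q = 3) := by
    intro q t hq hqm
    have hq2 : q % 2 = 1 :=
      Nat.odd_iff.1 (Nat.odd_mul.1 (Nat.odd_iff.2 (hqm ▸ hkodd))).1
    have hq1 := hq.two_le
    obtain ⟨n, rfl⟩ : ∃ n, q = 2 * n + 1 := ⟨q / 2, by omega⟩
    have := small_index hg1 (by omega) hq (hdiv _ t hqm)
    omega
  obtain ⟨q, hq, t, rfl⟩ := Nat.exists_prime_and_dvd (show m ≠ 1 by omega)
  -- The explicit primes below divide `lucasShift` at `9`, `15`, `25` and `18`, respectively, but not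
  -- at `g`, so `m` cannot have two prime factors.
  have ht : t = 1 := by
    by_contra ht1
    obtain ⟨q', hq', t', rfl⟩ := Nat.exists_prime_and_dvd ht1
    have h1 := hsmall q _ hq rfl
    have h2 := hsmall q' (q * t') hq' (by ring)
    have h3 := hdiv (q * q') t' (by ring)
    clear hdiv hsmall hdown h
    rcases h1 with ⟨rfl, rfl⟩ | ⟨rfl, rfl⟩ | ⟨rfl, rfl⟩ <;>
      rcases h2 with ⟨h2, rfl⟩ | ⟨h2, rfl⟩ | ⟨h2, rfl⟩ <;> try omega
    · have := h3 17 (by norm_num) (by norm_num) (by norm_num [lucasShift])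
      norm_num [lucasShift] at this
    · have := h3 61 (by norm_num) (by norm_num) (by norm_num [lucasShift])
      norm_num [lucasShift] at this
    · have := h3 61 (by norm_num) (by norm_num) (by norm_num [lucasShift])
      norm_num [lucasShift] at this
    · have := h3 3001 (by norm_num) (by norm_num) (by norm_num [lucasShift])
      norm_num [lucasShift] at this
    · have := h3 107 (by norm_num) (by norm_num) (by norm_num [lucasShift])
      norm_num [lucasShift] at this
  subst ht
  have := hsmall q 1 hq rfl
  have hr0 : 0 < r := by rcases Nat.eq_zero_or_pos r with rfl | h0 <;> omega
  rcases this with ⟨rfl, rfl⟩ | ⟨rfl, rfl⟩ | ⟨rfl, rfl⟩ <;> omega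

/-! ### The explicit relations and the solution -/

open Real in
theorem arctan_three_one :
    arctan (goldenRatio ^ 3) + arctan (goldenRatio ^ 1) = 3 / 4 * π := by
  have hsq := goldenRatio_sq
  have h1 := one_lt_goldenRatio
  have h3 : goldenRatio ^ 3 = 2 * goldenRatio + 1 := by
    linear_combination (goldenRatio + 1) * hsq
  rw [h3, pow_one, arctan_add_eq_add_pi (by nlinarith) (by linarith)]
  have : (2 * goldenRatio + 1 + goldenRatio) / (1 - (2 * goldenRatio + 1) * goldenRatio) = -1 := by
    rw [div_eq_iff (by nlinarith)]
    linear_combination (-2) * hsq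
  rw [this, arctan_neg, arctan_one]
  ring

open Real in
theorem arctan_five_one :
    arctan (goldenRatio ^ 5) - 3 * arctan (goldenRatio ^ 1) = - (1 / 2) * π := by
  have hsq := goldenRatio_sq
  have h1 := one_lt_goldenRatio
  have h2 := goldenRatio_lt_two
  have h5 : goldenRatio ^ 5 = 5 * goldenRatio + 3 := by
    linear_combination (goldenRatio ^ 3 + goldenRatio ^ 2 + 2 * goldenRatio + 3) * hsq
  have e1 := two_mul_arctan_add_pi h1
  have e2 : 2 * goldenRatio / (1 - goldenRatio ^ 2) = -2 := by
    rw [div_eq_iff (by nlinarith)]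
    linear_combination (-2) * hsq
  have e3 := arctan_inv_of_pos (show (0 : ℝ) < 2 by norm_num)
  have e4 := arctan_add (x := goldenRatio) (y := 2⁻¹) (by linarith)
  have e5 : (goldenRatio + 2⁻¹) / (1 - goldenRatio * 2⁻¹) = goldenRatio ^ 5 := by
    rw [h5, div_eq_iff (by linarith)]
    linear_combination (5 / 2) * hsq
  rw [e2, arctan_neg] at e1
  rw [e5] at e4
  rw [pow_one]
  linarith

open Real in
theorem arctan_six_two :
    arctan (goldenRatio ^ 6) + 2 * arctan (goldenRatio ^ 2) = 5 / 4 * π := by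
  have hsq := goldenRatio_sq
  have h1 := one_lt_goldenRatio
  have h6 : goldenRatio ^ 6 = 8 * goldenRatio + 5 := by
    linear_combination (goldenRatio ^ 4 + goldenRatio ^ 3 + 2 * goldenRatio ^ 2 +
      3 * goldenRatio + 5) * hsq
  have e1 := two_mul_arctan_add_pi (x := goldenRatio ^ 2) (by nlinarith)
  have hpos : 0 < 2 * goldenRatio - 1 := by linarith
  have e2 : 2 * goldenRatio ^ 2 / (1 - (goldenRatio ^ 2) ^ 2) = -(2 / (2 * goldenRatio - 1)) := by
    rw [hsq, ← neg_div, div_eq_div_iff (by nlinarith) hpos.ne']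
    linear_combination 2 * hsq
  have e4 := arctan_add (x := 1) (y := 2 / (2 * goldenRatio - 1)) (by
    rw [one_mul, div_lt_one hpos]
    nlinarith)
  have e5 : (1 + 2 / (2 * goldenRatio - 1)) / (1 - 1 * (2 / (2 * goldenRatio - 1))) =
      goldenRatio ^ 6 := by
    have : 2 * goldenRatio - 3 ≠ 0 := by nlinarith
    have e : 1 - 1 * (2 / (2 * goldenRatio - 1)) = (2 * goldenRatio - 3) / (2 * goldenRatio - 1) := by
      field_simp
      ring
    rw [h6, e, div_eq_iff (div_ne_zero this hpos.ne')]
    field_simp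
    linear_combination (-32) * hsq
  rw [e2, arctan_neg] at e1
  rw [e5, arctan_one] at e4
  linarith

open Real in
/-- Negative exponents reduce to positive ones by `arctan (x⁻¹) = π / 2 - arctan x`. -/
theorem arctan_zpow_natAbs (κ : ℤ) : ∃ s t : ℚ,
    ((κ = κ.natAbs ∧ s = 1 ∧ t = 0) ∨ (κ = -κ.natAbs ∧ s = -1 ∧ t = 1 / 2)) ∧
    arctan (goldenRatio ^ κ) = s * arctan (goldenRatio ^ κ.natAbs) + t * π := by
  rcases le_total 0 κ with h | h
  · obtain ⟨k, rfl⟩ := Int.eq_ofNat_of_zero_le h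
    exact ⟨1, 0, Or.inl ⟨by simp, rfl, rfl⟩, by simp⟩
  · obtain ⟨k, hk⟩ := Int.eq_ofNat_of_zero_le (Int.neg_nonneg_of_nonpos h)
    obtain rfl : κ = -k := by omega
    refine ⟨-1, 1 / 2, Or.inr ⟨by simp, rfl, rfl⟩, ?_⟩
    rw [zpow_neg, zpow_natCast, arctan_inv_of_pos (pow_pos goldenRatio_pos k), Int.natAbs_neg,
      Int.natAbs_natCast]
    push_cast
    ring

open Real in
/-- By irrationality, every relation with rational coefficients is a multiple of a given one. -/
theorem coeff_eq {l : ℕ} (hl : 1 ≤ l) {X : ℝ} {A B C c d : ℚ}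
    (hrel : X + d * arctan (goldenRatio ^ l) = c * π)
    (h : A * X + B * arctan (goldenRatio ^ l) = C * π) : B = A * d ∧ C = A * c := by
  have h1 : ((B - A * d : ℚ) : ℝ) * arctan (goldenRatio ^ l) = ((C - A * c : ℚ) : ℝ) * π := by
    push_cast
    linear_combination h - A * hrel
  have h2 := arctan_irrational hl h1
  rw [h2, Rat.cast_zero, zero_mul, eq_comm, mul_eq_zero, or_iff_left pi_ne_zero,
    Rat.cast_eq_zero] at h1
  exact ⟨sub_eq_zero.1 h2, sub_eq_zero.1 h1⟩


theorem stmt_13 (a b : ℚ) (ha : a ≠ 0) (hb : b ≠ 0) (κ ℓ : ℤ)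
    (hκ : κ ≠ 0) (hℓ : ℓ ≠ 0) (habs : |ℓ| ≤ |κ|) (hsum : κ + ℓ ≠ 0)
    (heq : (a : ℝ) * Real.arctan (((1 + Real.sqrt 5) / 2) ^ κ) +
      (b : ℝ) * Real.arctan (((1 + Real.sqrt 5) / 2) ^ ℓ) = Real.pi / 4) :
    (a, b, κ, ℓ) = (1/3, 1/3, 3, 1) ∨
    (a, b, κ, ℓ) = (1, 1, -3, -1) ∨
    (a, b, κ, ℓ) = (-1, 1, -3, 1) ∨
    (a, b, κ, ℓ) = (1, -1, 3, -1) ∨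
    (a, b, κ, ℓ) = (1/5, 2/5, 6, 2) ∨
    (a, b, κ, ℓ) = (1, 2, -6, -2) ∨
    (a, b, κ, ℓ) = (-1/3, 2/3, -6, 2) ∨
    (a, b, κ, ℓ) = (1, -2, 6, -2) ∨
    (a, b, κ, ℓ) = (1/7, 3/7, 5, 3) ∨
    (a, b, κ, ℓ) = (1, 3, -5, -3) ∨
    (a, b, κ, ℓ) = (-1/5, 3/5, -5, 3) ∨
    (a, b, κ, ℓ) = (1, -3, 5, -3) ∨
    (a, b, κ, ℓ) = (-1/2, 3/2, 5, 1) ∨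
    (a, b, κ, ℓ) = (-1/2, 3/2, -5, -1) ∨
    (a, b, κ, ℓ) = (1/4, 3/4, -5, 1) ∨
    (a, b, κ, ℓ) = (1/4, 3/4, 5, -1) := by
  obtain ⟨s, t, hst, hX⟩ := arctan_zpow_natAbs κ
  obtain ⟨s', t', hst', hY⟩ := arctan_zpow_natAbs ℓ
  have hφ : (1 + Real.sqrt 5) / 2 = Real.goldenRatio := rfl
  have hs : s ≠ 0 := by rcases hst with ⟨-, rfl, -⟩ | ⟨-, rfl, -⟩ <;> norm_num
  have hs' : s' ≠ 0 := by rcases hst' with ⟨-, rfl, -⟩ | ⟨-, rfl, -⟩ <;> norm_num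
  rw [hφ, hX, hY] at heq
  have hk : 1 ≤ κ.natAbs := by omega
  have hl : 1 ≤ ℓ.natAbs := by omega
  have hlk : ℓ.natAbs ≤ κ.natAbs := by
    rw [Int.abs_eq_natAbs, Int.abs_eq_natAbs] at habs
    omega
  generalize κ.natAbs = k at *
  generalize ℓ.natAbs = l at *
  have hmain : ((a * s : ℚ) : ℝ) * Real.arctan (Real.goldenRatio ^ k) +
      ((b * s' : ℚ) : ℝ) * Real.arctan (Real.goldenRatio ^ l) =
      ((1 / 4 - a * t - b * t' : ℚ) : ℝ) * Real.pi := by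
    push_cast
    linear_combination heq
  rcases hlk.eq_or_lt with rfl | hlt
  · exfalso
    obtain ⟨rfl, rfl⟩ : s = s' ∧ t = t' := by
      rcases hst with ⟨h1, rfl, rfl⟩ | ⟨h1, rfl, rfl⟩ <;>
        rcases hst' with ⟨h2, rfl, rfl⟩ | ⟨h2, rfl, rfl⟩ <;>
        first | exact ⟨rfl, rfl⟩ | (exfalso; omega)
    -- Here the relation collapses to a rational multiple of a single arctangent.
    have h1 := arctan_irrational (a := a * s + b * s) (c := 1 / 4 - a * t - b * t) hl
      (by push_cast at hmain ⊢; linear_combination hmain)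
    have h2 : a + b = 0 := by
      rw [← add_mul] at h1
      exact (mul_eq_zero.1 h1).resolve_right hs
    have h3 : (1 / 4 - a * t - b * t : ℚ) = 1 / 4 := by linear_combination (-t) * h2
    have h4 : b * s = -(a * s) := by linear_combination s * h2
    rw [h3, h4] at hmain
    push_cast at hmain
    have := Real.pi_pos
    linarith
  · have hclass := index_classification hl hlt fun p hp h2 =>
      ⟨fun h => (transfer (mul_ne_zero ha hs) hmain hp h2 h).2,
        fun h => (transfer (mul_ne_zero hb hs') ((add_comm _ _).trans hmain) hp h2 h).2⟩
    have h31 := arctan_three_one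
    have h51 := arctan_five_one
    have h62 := arctan_six_two
    have hcoef : ∃ c d : ℚ, b * s' = a * s * d ∧ 1 / 4 - a * t - b * t' = a * s * c ∧
        ((k = 3 ∧ l = 1 ∧ d = 1 ∧ c = 3 / 4) ∨ (k = 6 ∧ l = 2 ∧ d = 2 ∧ c = 5 / 4) ∨
          (k = 5 ∧ l = 3 ∧ d = 3 ∧ c = 7 / 4) ∨ (k = 5 ∧ l = 1 ∧ d = -3 ∧ c = -1 / 2)) := by
      rcases hclass with ⟨rfl, rfl⟩ | ⟨rfl, rfl⟩ | ⟨rfl, rfl⟩ | ⟨rfl, rfl⟩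
      · obtain ⟨e1, e2⟩ := coeff_eq (c := 3 / 4) (d := 1) hl (by push_cast; linarith) hmain
        exact ⟨_, _, e1, e2, by simp⟩
      · obtain ⟨e1, e2⟩ := coeff_eq (c := 5 / 4) (d := 2) hl (by push_cast; linarith) hmain
        exact ⟨_, _, e1, e2, by simp⟩
      -- The relation for `(5, 3)` combines those for `(5, 1)` and `(3, 1)`.
      · obtain ⟨e1, e2⟩ := coeff_eq (c := 7 / 4) (d := 3) hl (by push_cast; linarith) hmain
        exact ⟨_, _, e1, e2, by simp⟩
      · obtain ⟨e1, e2⟩ := coeff_eq (c := -1 / 2) (d := -3) hl (by push_cast; linarith) hmain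
        exact ⟨_, _, e1, e2, by simp⟩
    obtain ⟨c, d, e1, e2, hcase⟩ := hcoef
    clear hclass h31 h51 h62 hmain heq hX hY
    rcases hcase with ⟨rfl, rfl, rfl, rfl⟩ | ⟨rfl, rfl, rfl, rfl⟩ | ⟨rfl, rfl, rfl, rfl⟩ |
        ⟨rfl, rfl, rfl, rfl⟩ <;>
      rcases hst with ⟨rfl, rfl, rfl⟩ | ⟨rfl, rfl, rfl⟩ <;>
      rcases hst' with ⟨rfl, rfl, rfl⟩ | ⟨rfl, rfl, rfl⟩ <;>
      norm_num [Prod.mk.injEq] at e1 e2 ⊢ <;>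
      constructor <;> linarith
end

section
/- Let φ = (1+√5)/2 be the golden ratio. Then arctan(φ⁶) + 2·arctan(φ²) = 5π/4. -/
/-!
Since `φ ^ 2 > 1`, the doubling formula gives `2 arctan (φ ^ 2) = arctan (-2 / √5) + π`, because
`φ ^ 4 - 1 = φ ^ 2 (φ ^ 2 - φ ^ (-2)) = √5 φ ^ 2`. With `φ ^ 6 = 9 + 4 √5`, the addition formula
yields `arctan (φ ^ 6) + arctan (-2 / √5) = arctan 1 = π / 4`.
-/

theorem stmt_15 :
    Real.arctan (((1 + Real.sqrt 5) / 2) ^ 6) +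
      2 * Real.arctan (((1 + Real.sqrt 5) / 2) ^ 2) = 5 * Real.pi / 4 := by
  have hs : Real.sqrt 5 ^ 2 = 5 := Real.sq_sqrt (by norm_num)
  have hpos : 0 < Real.sqrt 5 := Real.sqrt_pos.mpr (by norm_num)
  generalize Real.sqrt 5 = s at hs hpos ⊢
  have h2 : ((1 + s) / 2) ^ 2 = (3 + s) / 2 := by linear_combination hs / 4
  have h6 : ((1 + s) / 2) ^ 6 = 9 + 4 * s := by
    rw [show ((1 + s) / 2) ^ 6 = (((1 + s) / 2) ^ 2) ^ 3 by ring, h2]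
    linear_combination (9 + s) / 8 * hs
  have hdouble : 2 * ((3 + s) / 2) / (1 - ((3 + s) / 2) ^ 2) = -2 / s := by
    have hne : 1 - ((3 + s) / 2) ^ 2 ≠ 0 := by nlinarith
    rw [div_eq_div_iff hne hpos.ne']
    linear_combination (1 / 2) * hs
  have hprod : (9 + 4 * s) * (-2 / s) < 1 := by
    have : -2 / s < 0 := div_neg_of_neg_of_pos (by norm_num) hpos
    nlinarith
  have hsum : (9 + 4 * s + -2 / s) / (1 - (9 + 4 * s) * (-2 / s)) = 1 := by
    rw [div_eq_one_iff_eq (by linarith)]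
    field_simp
    linear_combination 4 * hs
  rw [h2, h6, Real.two_mul_arctan_add_pi (by linarith), hdouble, ← add_assoc,
    Real.arctan_add hprod, hsum, Real.arctan_one]
  ring
end

section
/- Let φ = (1+√5)/2 be the golden ratio. Then arctan(φ⁵) + 3·arctan(φ³) = 7π/4. -/
/-!
Since `φ³ = 2 + √5` satisfies `a² = 4a + 1`, doubling gives `2 arctan φ³ = π - arctan (1/2)`.
Since `φ³ + φ⁵ = (15 + 7√5)/2` and `φ⁸ - 1 = 3 (φ³ + φ⁵)`, the addition formula gives
`arctan φ⁵ + arctan φ³ = π - arctan (1/3)`. Adding the two and using Euler's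
`arctan (1/2) + arctan (1/3) = π/4` yields `2π - π/4`.
-/

theorem stmt_16 :
    Real.arctan (((1 + Real.sqrt 5) / 2) ^ 5) +
      3 * Real.arctan (((1 + Real.sqrt 5) / 2) ^ 3) = 7 * Real.pi / 4 := by
  have hs : Real.sqrt 5 ^ 2 = 5 := Real.sq_sqrt (by norm_num)
  have hp : 0 ≤ Real.sqrt 5 := Real.sqrt_nonneg 5
  have h3 : ((1 + Real.sqrt 5) / 2) ^ 3 = 2 + Real.sqrt 5 := by grind
  have h5 : ((1 + Real.sqrt 5) / 2) ^ 5 = (11 + 5 * Real.sqrt 5) / 2 := by grind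
  rw [h3, h5]
  have hdouble : 2 * Real.arctan (2 + Real.sqrt 5) = -Real.arctan 2⁻¹ + Real.pi := by
    have h := Real.two_mul_arctan_add_pi (x := 2 + Real.sqrt 5) (by linarith)
    have e : 2 * (2 + Real.sqrt 5) / (1 - (2 + Real.sqrt 5) ^ 2) = -2⁻¹ := by
      rw [div_eq_iff (by nlinarith)]
      nlinarith
    rw [h, e, Real.arctan_neg]
  have hsum : Real.arctan ((11 + 5 * Real.sqrt 5) / 2) + Real.arctan (2 + Real.sqrt 5)
      = -Real.arctan 3⁻¹ + Real.pi := by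
    have h := Real.arctan_add_eq_add_pi (x := (11 + 5 * Real.sqrt 5) / 2) (y := 2 + Real.sqrt 5)
      (by nlinarith) (by linarith)
    have e : ((11 + 5 * Real.sqrt 5) / 2 + (2 + Real.sqrt 5)) /
        (1 - (11 + 5 * Real.sqrt 5) / 2 * (2 + Real.sqrt 5)) = -3⁻¹ := by
      rw [div_eq_iff (by nlinarith)]
      nlinarith
    rw [h, e, Real.arctan_neg]
  linarith [Real.arctan_inv_2_add_arctan_inv_3]
end

section
/- Let φ = (1+√5)/2 be the golden ratio. Then 3·arctan(φ) − arctan(φ⁵) = π/2. -/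
/-!
Since `φ² = φ + 1`, the tangent of `2 arctan φ` is `2φ / (1 - φ²) = -2`, so
`2 arctan φ = π - arctan 2`. As `π/2 - arctan φ⁵ = arctan φ⁻⁵`, what remains is
`arctan φ + arctan φ⁻⁵ = arctan 2`, which is the addition formula together with
`φ⁵ = 5φ + 3`.
-/

theorem stmt_17 :
    3 * Real.arctan ((1 + Real.sqrt 5) / 2) -
      Real.arctan (((1 + Real.sqrt 5) / 2) ^ 5) = Real.pi / 2 := by
  have h5 : Real.sqrt 5 ^ 2 = 5 := Real.sq_sqrt (by norm_num)
  have hgt : 1 < Real.sqrt 5 := by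
    rw [Real.lt_sqrt (by norm_num)]; norm_num
  set φ : ℝ := (1 + Real.sqrt 5) / 2 with hφ
  have hsq : φ ^ 2 = φ + 1 := by rw [hφ]; linarith
  have h1 : 1 < φ := by rw [hφ]; linarith
  have hpow : φ ^ 5 = 5 * φ + 3 := by
    linear_combination (φ ^ 3 + φ ^ 2 + 2 * φ + 3) * hsq
  have hdouble : 2 * Real.arctan φ = Real.pi - Real.arctan 2 := by
    have hval : 2 * φ / (1 - φ ^ 2) = -2 := by
      rw [hsq, div_eq_iff (by linarith)]; ring
    rw [Real.two_mul_arctan_add_pi h1, hval, Real.arctan_neg]; ring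
  have hinv : Real.arctan (φ ^ 5)⁻¹ = Real.pi / 2 - Real.arctan (φ ^ 5) :=
    Real.arctan_inv_of_pos (by positivity)
  have hadd : Real.arctan φ + Real.arctan (φ ^ 5)⁻¹ = Real.arctan 2 := by
    have hpos : 0 < 5 * φ + 3 := by linarith
    have hlt : φ * (5 * φ + 3)⁻¹ < 1 := by
      rw [← div_eq_mul_inv, div_lt_one hpos]; linarith
    rw [hpow, Real.arctan_add hlt]
    congr 1
    rw [div_eq_iff (by linarith)]
    field_simp
    linear_combination 5 * hsq
  linarith
end

section
/- Let n be a natural number and x a real number such that −π/4 < n·arctan(x) < 3π/4. Let z = (1 + x·i)^n, a complex number with real part Re(z) and imaginary part Im(z). Then Re(z) + Im(z) > 0 and n·arctan(x) − arctan((Im(z) − Re(z))/(Re(z) + Im(z))) = π/4. -/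
/-!
With `θ = arctan x` and `r = √(1 + x²)`, the number `1 + x i` has polar form `r (cos θ + i sin θ)`,
so by de Moivre its `n`-th power is `r ^ n (cos nθ + i sin nθ)`. Putting `t = nθ - π/4`, the
addition formulas turn `Re + Im` and `Im - Re` into `√2 r ^ n cos t` and `√2 r ^ n sin t`.
The hypotheses say exactly that `t ∈ (-π/2, π/2)`, where `cos t > 0` and `arctan (tan t) = t`.
-/

theorem one_add_mul_I_pow_polar (n : ℕ) (x : ℝ) :
    ((1 : ℂ) + x * Complex.I) ^ n =
      ((√(1 + x ^ 2) ^ n : ℝ) : ℂ) *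
        (((Real.cos (n * Real.arctan x) : ℝ) : ℂ) +
          ((Real.sin (n * Real.arctan x) : ℝ) : ℂ) * Complex.I) := by
  have hr : √(1 + x ^ 2) ≠ 0 := by positivity
  have base : (1 : ℂ) + x * Complex.I = ((√(1 + x ^ 2) : ℝ) : ℂ) *
      (Complex.cos (Real.arctan x : ℝ) + Complex.sin (Real.arctan x : ℝ) * Complex.I) := by
    rw [← Complex.ofReal_cos, ← Complex.ofReal_sin, Real.cos_arctan, Real.sin_arctan]
    apply Complex.ext
    · simp [-Complex.ofReal_div, -Complex.ofReal_inv, hr]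
    · simp only [Complex.add_im, Complex.one_im, Complex.re_ofReal_mul, Complex.im_ofReal_mul,
        Complex.ofReal_im, Complex.I_im]
      field_simp
      ring
  rw [base, mul_pow, Complex.cos_add_sin_mul_I_pow]
  push_cast
  rfl

theorem stmt_19 (n : ℕ) (x : ℝ)
    (h₁ : -(Real.pi / 4) < (n : ℝ) * Real.arctan x)
    (h₂ : (n : ℝ) * Real.arctan x < 3 * Real.pi / 4) :
    ((((1 : ℂ) + x * Complex.I) ^ n).re + (((1 : ℂ) + x * Complex.I) ^ n).im > 0) ∧
    (n : ℝ) * Real.arctan x -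
      Real.arctan (((((1 : ℂ) + x * Complex.I) ^ n).im -
          (((1 : ℂ) + x * Complex.I) ^ n).re) /
        ((((1 : ℂ) + x * Complex.I) ^ n).re + (((1 : ℂ) + x * Complex.I) ^ n).im)) =
      Real.pi / 4 := by
  have hre : (((1 : ℂ) + x * Complex.I) ^ n).re =
      √(1 + x ^ 2) ^ n * Real.cos (n * Real.arctan x) := by
    rw [one_add_mul_I_pow_polar, Complex.re_ofReal_mul]
    simp only [Complex.add_re, Complex.ofReal_re, Complex.re_ofReal_mul, Complex.I_re, mul_zero,
      add_zero]
  have him : (((1 : ℂ) + x * Complex.I) ^ n).im =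
      √(1 + x ^ 2) ^ n * Real.sin (n * Real.arctan x) := by
    rw [one_add_mul_I_pow_polar, Complex.im_ofReal_mul]
    simp only [Complex.add_im, Complex.ofReal_im, Complex.im_ofReal_mul, Complex.I_im, mul_one,
      zero_add]
  rw [hre, him]
  have hR : 0 < √(1 + x ^ 2) ^ n := by positivity
  generalize √(1 + x ^ 2) ^ n = R at hR
  obtain ⟨t, ht⟩ : ∃ t, (n : ℝ) * Real.arctan x = t + Real.pi / 4 := ⟨_, (sub_add_cancel _ _).symm⟩
  rw [ht] at h₁ h₂ ⊢
  have ht₁ : -(Real.pi / 2) < t := by linarith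
  have ht₂ : t < Real.pi / 2 := by linarith
  have hc : 0 < Real.cos t := Real.cos_pos_of_mem_Ioo ⟨ht₁, ht₂⟩
  have hsum : R * Real.cos (t + Real.pi / 4) + R * Real.sin (t + Real.pi / 4) =
      R * √2 * Real.cos t := by
    rw [Real.cos_add, Real.sin_add, Real.cos_pi_div_four, Real.sin_pi_div_four]
    ring
  have hdiff : R * Real.sin (t + Real.pi / 4) - R * Real.cos (t + Real.pi / 4) =
      R * √2 * Real.sin t := by
    rw [Real.cos_add, Real.sin_add, Real.cos_pi_div_four, Real.sin_pi_div_four]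
    ring
  have hR2 : 0 < R * √2 := by positivity
  rw [hsum, hdiff]
  refine ⟨mul_pos hR2 hc, ?_⟩
  rw [mul_div_mul_left _ _ hR2.ne', ← Real.tan_eq_sin_div_cos, Real.arctan_tan ht₁ ht₂]
  ring
end
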